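/- Let φ be a social choice function. If the set of voters V is finite and the range of φ has cardinality at most 3, then: φ individually strategy-proof implies that φ satisfies the preference reversal property. -/

import Mathlib

/-- A weak ordering on the set `A` of alternatives: a reflexive, transitive
and total relation. -/
def IsWeakOrdering {A : Type*} (R : A → A → Prop) : Prop :=
  Reflexive R ∧ Transitive R ∧ ∀ x y : A, R x y ∨ R y x

/-- `x ≻ y`: `x ≿ y` and not `y ≿ x`. -/
def StrictPref {A : Type*} (R : A → A → Prop) (x y : A) : Prop :=
  R x y ∧ ¬ R y x

/-- Individual strategy-proofness: for every profile `P`, voter `v` and feasible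
deviation (a profile `Q` agreeing with `P` off `v`), it is not the case that
`φ Q ≻_{P v} φ P`. -/
def ISP {A V : Type*} (W : V → Set (A → A → Prop)) (φ : (∀ v : V, W v) → A) : Prop :=
  ∀ P Q : ∀ v : V, W v, ∀ v : V, (∀ w : V, w ≠ v → P w = Q w) →
    ¬ StrictPref (P v).1 (φ Q) (φ P)

/-- Group strategy-proofness: there are no nonempty coalition `D`, true profile `P`
and manipulated profile `Q` (agreeing with `P` off `D`) such that every member of
`D` strictly prefers `φ Q` to `φ P` according to its true preference. -/
def GSP {A V : Type*} (W : V → Set (A → A → Prop)) (φ : (∀ v : V, W v) → A) : Prop :=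
  ¬ ∃ (D : Set V) (P Q : ∀ v : V, W v), D.Nonempty ∧ (∀ v ∉ D, P v = Q v) ∧
      ∀ v ∈ D, StrictPref (P v).1 (φ Q) (φ P)

/-- The Preference Reversal property. -/
def PrefReversal {A V : Type*} (W : V → Set (A → A → Prop)) (φ : (∀ v : V, W v) → A) : Prop :=
  ∀ P Q : ∀ v : V, W v, φ P ≠ φ Q →
    ∃ v : V, (P v).1 (φ P) (φ Q) ∧ (Q v).1 (φ Q) (φ P) ∧ P v ≠ Q v

/-- The Almost Preference Reversal property. -/
def AlmostPrefReversal {A V : Type*} (W : V → Set (A → A → Prop))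
    (φ : (∀ v : V, W v) → A) : Prop :=
  ∀ P Q : ∀ v : V, W v, φ P ≠ φ Q →
    (∃ v : V, (P v).1 (φ P) (φ Q) ∧ P v ≠ Q v) ∧
    (∃ w : V, (Q w).1 (φ Q) (φ P) ∧ P w ≠ Q w)

/-- `W` resolves the `P`-indifference at `a`. -/
def Resolves {A : Type*} (W P : A → A → Prop) (a : A) : Prop :=
  ∀ x : A, x ≠ a → P a x → StrictPref W a x

/-- `W` is an `(a,b)`-resolvent of `(P, Q)`. -/
def IsResolvent {A : Type*} (W : A → A → Prop) (a b : A) (P Q : A → A → Prop) : Prop :=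
  Resolves W P a ∧ Resolves W Q b

/-- A complete set of preferences. -/
def CompleteSet {A : Type*} (O : Set (A → A → Prop)) : Prop :=
  ∀ P ∈ O, ∀ Q ∈ O, ∀ a b : A, a ≠ b → ¬ (P a b ∧ Q b a) →
    ∃ W ∈ O, IsResolvent W a b P Q

/-- Under individual strategy-proofness, moving the voters of a finite set `S` one at a time from
`P` to `Q` preserves every property `I` of outcomes that is preserved by each pairwise preference
reversal between `P v` and `Q v`, `v ∈ S`. -/
theorem ISP.invariant_of_switch {A V : Type*} {W : V → Set (A → A → Prop)}
    {φ : (∀ v : V, W v) → A} (hwo : ∀ v : V, ∀ R ∈ W v, IsWeakOrdering R) (hISP : ISP W φ)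
    (P Q : ∀ v : V, W v) (I : A → Prop) (S : Finset V)
    (hstep : ∀ v ∈ S, P v ≠ Q v → ∀ x ∈ Set.range φ, ∀ y ∈ Set.range φ,
      (P v).1 x y → (Q v).1 y x → I x → I y)
    (R R' : ∀ v : V, W v) (hR : ∀ v ∈ S, R v = P v) (hR' : ∀ v ∈ S, R' v = Q v)
    (hoff : ∀ v ∉ S, R' v = R v) (hI : I (φ R)) : I (φ R') := by
  classical
  induction S using Finset.induction_on generalizing R with
  | empty =>
    have h : R' = R := funext fun v => hoff v (Finset.notMem_empty v)
    rwa [h]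
  | insert v S hv ih =>
    have hRv : R v = P v := hR v (Finset.mem_insert_self v S)
    refine ih (fun w hw => hstep w (Finset.mem_insert_of_mem hw)) (Function.update R v (Q v))
      (fun w hw => ?_) (fun w hw => hR' w (Finset.mem_insert_of_mem hw)) (fun w hw => ?_) ?_
    · rw [Function.update_of_ne (ne_of_mem_of_not_mem hw hv)]
      exact hR w (Finset.mem_insert_of_mem hw)
    · by_cases hwv : w = v
      · subst hwv
        rw [Function.update_self]
        exact hR' w (Finset.mem_insert_self w S)
      · rw [Function.update_of_ne hwv]
        exact hoff w (by simp [hwv, hw])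
    · by_cases hPQ : P v = Q v
      · rwa [← hPQ, ← hRv, Function.update_eq_self]
      · have hagree : ∀ w, w ≠ v → R w = Function.update R v (Q v) w :=
          fun w hw => (Function.update_of_ne hw _ _).symm
        have hP := hISP R (Function.update R v (Q v)) v hagree
        have hQ := hISP (Function.update R v (Q v)) R v fun w hw => (hagree w hw).symm
        rw [hRv] at hP
        rw [Function.update_self] at hQ
        have htP := (hwo v _ (P v).2).2.2 (φ R) (φ (Function.update R v (Q v)))
        have htQ := (hwo v _ (Q v).2).2.2 (φ R) (φ (Function.update R v (Q v)))
        unfold StrictPref at hP hQ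
        exact hstep v (Finset.mem_insert_self v S) hPQ _ ⟨R, rfl⟩ _ ⟨_, rfl⟩
          (by tauto) (by tauto) hI

/-- If `V` is finite and the range of `φ` has cardinality at most 3,
then individual strategy-proofness implies the preference reversal property. -/
theorem isp_implies_prefReversal_of_range_le_three {A V : Type*} [Finite V]
    (W : V → Set (A → A → Prop))
    (hne : ∀ v : V, (W v).Nonempty)
    (hwo : ∀ v : V, ∀ R ∈ W v, IsWeakOrdering R)
    (φ : (∀ v : V, W v) → A)
    (hrange : ∃ x y z : A, ∀ P : ∀ v : V, W v, φ P = x ∨ φ P = y ∨ φ P = z)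
    (hISP : ISP W φ) :
    PrefReversal W φ := by
  classical
  have := Fintype.ofFinite V
  intro P Q hne_out
  by_contra hno
  push Not at hno
  obtain ⟨c, hc⟩ : ∃ c, ∀ y ∈ Set.range φ, y = φ P ∨ y = φ Q ∨ y = c := by
    obtain ⟨x, y, z, h⟩ := hrange
    have hP := h P
    have hQ := h Q
    by_cases hx : x = φ P ∨ x = φ Q
    · by_cases hy : y = φ P ∨ y = φ Q
      · refine ⟨z, ?_⟩
        rintro _ ⟨R, rfl⟩
        have := h R
        grind
      · refine ⟨y, ?_⟩
        rintro _ ⟨R, rfl⟩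
        have := h R
        grind
    · refine ⟨x, ?_⟩
      rintro _ ⟨R, rfl⟩
      have := h R
      grind
  -- The voters who can move the outcome from `φ P` to `c` are switched last.
  let M : Finset V := {v | (P v).1 (φ P) c ∧ (Q v).1 c (φ P)}
  let R : ∀ v : V, W v := fun v => if v ∈ M then P v else Q v
  have hRP : φ R = φ P := by
    refine hISP.invariant_of_switch hwo P Q (· = φ P) Mᶜ ?_ P R (fun _ _ => rfl) ?_ ?_ rfl
    · rintro v hv hPQ x - y hy hxy hyx rfl
      rcases hc y hy with rfl | rfl | rfl
      · rfl
      · exact absurd (hno v hxy hyx) hPQ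
      · exact absurd (by simp [M, hxy, hyx]) (Finset.mem_compl.mp hv)
    · intro v hv
      exact if_neg (by simpa using hv)
    · intro v hv
      exact if_pos (by simpa using hv)
  refine hISP.invariant_of_switch hwo P Q (· ≠ φ Q) M ?_ R Q ?_ (fun _ _ => rfl) ?_
    (hRP ▸ hne_out) rfl
  · rintro v hv hPQ x hx y - hxy hyx hxQ rfl
    rcases hc x hx with rfl | rfl | rfl
    · exact hPQ (hno v hxy hyx)
    · exact hxQ rfl
    · obtain ⟨hP, hQ⟩ : (P v).1 (φ P) x ∧ (Q v).1 x (φ P) := by simpa [M] using hv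
      exact hPQ (hno v ((hwo v _ (P v).2).2.1 hP hxy) ((hwo v _ (Q v).2).2.1 hyx hQ))
  · intro v hv
    exact if_pos hv
  · intro v hv
    exact (if_neg hv).symm
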